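/- Let N ≥ 2, let B ⊂ ℝ^N be a radial domain, let 𝓤 be a set of continuous functions on B, and define M = {e ∈ S : u(x) ≥ u(σ_e(x)) for all x ∈ B(e) and all u ∈ 𝓤}. Suppose S = M ∪ (−M). Then there exist pairwise orthogonal unit vectors e₁, …, e_{N−1} ∈ S such that u ≡ u ∘ σ_{e_i} on B for every i = 1, …, N−1 and every u ∈ 𝓤. -/

import Mathlib

/-!
The set `M` is closed, because `u (σ_e x) ≤ u x` for `x ∈ B(e)` survives limits in `e`: the
condition `0 < x·e` is open in `e`, and `σ_e` preserves `B`, where `u` is continuous. A unit vector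
in `M ∩ (-M)` is a direction of symmetry for every `u ∈ 𝓤`.

The unit sphere of a subspace `W` of dimension at least two is connected, is covered by the closed
sets `M` and `-M`, and meets both of them since they are antipodal. Hence it meets `M ∩ (-M)`
(`exists_symm_in_submodule`). Applying this to the orthogonal complement of the vectors already
found produces the `N - 1` orthogonal directions one by one.
-/

open Set Metric Filter
open scoped RealInnerProductSpace

noncomputable section

variable {N : ℕ}

/-- Reflection through the hyperplane `H(e) = {x : ⟪x,e⟫ = 0}`:
`σ_e(x) = x - 2 (x·e) e`. -/
def reflHyp (e x : EuclideanSpace ℝ (Fin N)) : EuclideanSpace ℝ (Fin N) :=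
  x - (2 * ⟪x, e⟫) • e

/-- The half domain `B(e) = {x ∈ B : x·e > 0}`. -/
def halfDom (B : Set (EuclideanSpace ℝ (Fin N))) (e : EuclideanSpace ℝ (Fin N)) :
    Set (EuclideanSpace ℝ (Fin N)) := {x ∈ B | 0 < ⟪x, e⟫}

/-- A radial domain: an open ball or an open annulus centered at the origin. -/
def IsRadialDomain (B : Set (EuclideanSpace ℝ (Fin N))) : Prop :=
  (∃ R, 0 < R ∧ B = Metric.ball 0 R) ∨
  (∃ r R, 0 < r ∧ r < R ∧ B = {x : EuclideanSpace ℝ (Fin N) | r < ‖x‖ ∧ ‖x‖ < R})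

/-- `u` is foliated Schwarz symmetric on `D` with respect to the unit vector `p`:
`u(x) ≥ u(y)` whenever `|x| = |y|` and `x·p ≥ y·p`.  (This is equivalent to axial
symmetry with respect to `ℝp` together with monotonicity in the polar angle.) -/
def FoliatedSchwarzOn (D : Set (EuclideanSpace ℝ (Fin N)))
    (u : EuclideanSpace ℝ (Fin N) → ℝ) (p : EuclideanSpace ℝ (Fin N)) : Prop :=
  ∀ x ∈ D, ∀ y ∈ D, ‖x‖ = ‖y‖ → ⟪y, p⟫ ≤ ⟪x, p⟫ → u y ≤ u x

/-- The set `M = {e ∈ S : u ≥ u ∘ σ_e on B(e) for all u ∈ 𝓤}`. -/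
def reflMonotoneSet (B : Set (EuclideanSpace ℝ (Fin N)))
    (𝓤 : Set (EuclideanSpace ℝ (Fin N) → ℝ)) : Set (EuclideanSpace ℝ (Fin N)) :=
  {e | ‖e‖ = 1 ∧ ∀ u ∈ 𝓤, ∀ x ∈ halfDom B e, u (reflHyp e x) ≤ u x}

lemma norm_reflHyp {e : EuclideanSpace ℝ (Fin N)} (he : ‖e‖ = 1) (x : EuclideanSpace ℝ (Fin N)) :
    ‖reflHyp e x‖ = ‖x‖ := by
  have h : ‖reflHyp e x‖ ^ 2 = ‖x‖ ^ 2 := by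
    unfold reflHyp
    rw [norm_sub_sq_real, inner_smul_right, norm_smul, he, Real.norm_eq_abs, mul_one, sq_abs]
    ring
  exact (sq_eq_sq₀ (norm_nonneg _) (norm_nonneg _)).1 h

lemma IsRadialDomain.mem_of_norm_eq {B : Set (EuclideanSpace ℝ (Fin N))} (hB : IsRadialDomain B)
    {x y : EuclideanSpace ℝ (Fin N)} (hxy : ‖y‖ = ‖x‖) (hx : x ∈ B) : y ∈ B := by
  rcases hB with ⟨R, -, rfl⟩ | ⟨r, R, -, -, rfl⟩
  · rw [mem_ball_zero_iff] at hx ⊢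
    rwa [hxy]
  · simpa only [mem_ofPred_eq, hxy] using hx

lemma isOpen_of_isRadialDomain {B : Set (EuclideanSpace ℝ (Fin N))} (hB : IsRadialDomain B) :
    IsOpen B := by
  rcases hB with ⟨R, -, rfl⟩ | ⟨r, R, -, -, rfl⟩
  · exact isOpen_ball
  · exact (isOpen_lt continuous_const continuous_norm).inter
      (isOpen_lt continuous_norm continuous_const)

lemma isClosed_reflMonotoneSet {B : Set (EuclideanSpace ℝ (Fin N))} (hB : IsRadialDomain B)
    {𝓤 : Set (EuclideanSpace ℝ (Fin N) → ℝ)} (h𝓤 : ∀ u ∈ 𝓤, ContinuousOn u B) :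
    IsClosed (reflMonotoneSet B 𝓤) := by
  refine IsSeqClosed.isClosed ?_
  intro f e hf hfe
  have he : ‖e‖ = 1 := by
    refine tendsto_nhds_unique hfe.norm ?_
    simp only [(hf _).1]
    exact tendsto_const_nhds
  refine ⟨he, fun u hu x hx => ?_⟩
  have hmem : reflHyp e x ∈ B := hB.mem_of_norm_eq (norm_reflHyp he x) hx.1
  have hu' : ContinuousAt u (reflHyp e x) :=
    (h𝓤 u hu).continuousAt ((isOpen_of_isRadialDomain hB).mem_nhds hmem)
  have hrefl : Continuous fun e' : EuclideanSpace ℝ (Fin N) => reflHyp e' x := by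
    unfold reflHyp
    fun_prop
  have hlim := hu'.tendsto.comp ((hrefl.tendsto e).comp hfe)
  have hinner : Continuous fun e' : EuclideanSpace ℝ (Fin N) => ⟪x, e'⟫ := by fun_prop
  refine le_of_tendsto hlim ?_
  filter_upwards [((hinner.tendsto e).comp hfe).eventually_const_lt hx.2] with n hn
  exact (hf n).2 u hu x ⟨hx.1, hn⟩

/-- A vector of `M ∩ (-M)` is a direction of symmetry: the reflection `σ_e = σ_{-e}` is an
involution exchanging `B(e)` and `B(-e)`, so the conditions for `e` and `-e` are opposite
inequalities off `H(e)`, and on `H(e)` there is nothing to prove. -/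
lemma symm_of_mem_of_neg_mem {B : Set (EuclideanSpace ℝ (Fin N))} (hB : IsRadialDomain B)
    {𝓤 : Set (EuclideanSpace ℝ (Fin N) → ℝ)} {e : EuclideanSpace ℝ (Fin N)}
    (h₁ : e ∈ reflMonotoneSet B 𝓤) (h₂ : -e ∈ reflMonotoneSet B 𝓤) :
    ∀ u ∈ 𝓤, ∀ x ∈ B, u (reflHyp e x) = u x := by
  intro u hu x hx
  have he := h₁.1
  have hneg : ∀ y, reflHyp (-e) y = reflHyp e y := fun y => by simp [reflHyp]
  have hinner : ⟪reflHyp e x, e⟫ = -⟪x, e⟫ := by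
    unfold reflHyp
    rw [inner_sub_left, real_inner_smul_left, real_inner_self_eq_norm_sq, he]
    ring
  have hinv : reflHyp e (reflHyp e x) = x := by
    conv_lhs => rw [reflHyp, hinner]
    simp [reflHyp]
  have hmem : reflHyp e x ∈ B := hB.mem_of_norm_eq (norm_reflHyp he x) hx
  rcases lt_trichotomy 0 ⟪x, e⟫ with h | h | h
  · refine le_antisymm (h₁.2 u hu x ⟨hx, h⟩) ?_
    have := h₂.2 u hu (reflHyp e x) ⟨hmem, by rw [inner_neg_right, hinner]; linarith⟩
    rwa [hneg, hinv] at this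
  · simp [reflHyp, ← h]
  · refine le_antisymm ?_ ?_
    · have := h₂.2 u hu x ⟨hx, by rw [inner_neg_right]; linarith⟩
      rwa [hneg] at this
    · have := h₁.2 u hu (reflHyp e x) ⟨hmem, by rw [hinner]; linarith⟩
      rwa [hinv] at this

/-- The connectedness step: the unit sphere of `W` cannot be covered by two disjoint nonempty
closed sets. -/
lemma exists_symm_in_submodule {B : Set (EuclideanSpace ℝ (Fin N))} (hB : IsRadialDomain B)
    {𝓤 : Set (EuclideanSpace ℝ (Fin N) → ℝ)} (h𝓤 : ∀ u ∈ 𝓤, ContinuousOn u B)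
    (hSM : ∀ e : EuclideanSpace ℝ (Fin N), ‖e‖ = 1 →
      e ∈ reflMonotoneSet B 𝓤 ∨ -e ∈ reflMonotoneSet B 𝓤)
    (W : Submodule ℝ (EuclideanSpace ℝ (Fin N))) (hW : 1 < Module.finrank ℝ W) :
    ∃ e ∈ W, ‖e‖ = 1 ∧ ∀ u ∈ 𝓤, ∀ x ∈ B, u (reflHyp e x) = u x := by
  have hrank : 1 < Module.rank ℝ W := by
    rw [← Module.finrank_eq_rank]
    exact_mod_cast hW
  have : Nontrivial W := Module.nontrivial_of_finrank_pos (R := ℝ) (by omega)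
  obtain ⟨a, ha⟩ := (NormedSpace.sphere_nonempty (x := (0 : W)) (r := 1)).2 zero_le_one
  have ha' : ‖(a : EuclideanSpace ℝ (Fin N))‖ = 1 := by simpa using ha
  have hna : -a ∈ sphere (0 : W) 1 := by simpa using ha
  have hM := isClosed_reflMonotoneSet hB h𝓤
  have hcont : Continuous fun w : W => (w : EuclideanSpace ℝ (Fin N)) := continuous_subtype_val
  obtain ⟨w, -, hw₁, hw₂⟩ := isPreconnected_closed_iff.1
    (isPreconnected_sphere hrank (0 : W) 1)
    {w : W | (w : EuclideanSpace ℝ (Fin N)) ∈ reflMonotoneSet B 𝓤}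
    {w : W | -(w : EuclideanSpace ℝ (Fin N)) ∈ reflMonotoneSet B 𝓤}
    (hM.preimage hcont) (hM.preimage hcont.neg)
    (fun w hw => hSM w (by simpa using hw))
    (by
      rcases hSM a ha' with h | h
      · exact ⟨a, ha, h⟩
      · exact ⟨-a, hna, by simpa using h⟩)
    (by
      rcases hSM a ha' with h | h
      · exact ⟨-a, hna, by simpa using h⟩
      · exact ⟨a, ha, h⟩)
  exact ⟨w, w.2, hw₁.1, symm_of_mem_of_neg_mem hB hw₁ hw₂⟩

/-- first step in the proof of Proposition `newprop`:
if `S = M ∪ (−M)`, then there are `N−1` pairwise orthogonal unit vectors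
`e₁, …, e_{N−1}` such that every `u ∈ 𝓤` is symmetric with respect to each
hyperplane `H(eᵢ)`. -/
theorem exists_orthogonal_symmetry_hyperplanes
    (N : ℕ) (hN : 2 ≤ N)
    (B : Set (EuclideanSpace ℝ (Fin N))) (hB : IsRadialDomain B)
    (𝓤 : Set (EuclideanSpace ℝ (Fin N) → ℝ))
    (h𝓤 : ∀ u ∈ 𝓤, ContinuousOn u B)
    (hSM : ∀ e : EuclideanSpace ℝ (Fin N), ‖e‖ = 1 →
      e ∈ reflMonotoneSet B 𝓤 ∨ -e ∈ reflMonotoneSet B 𝓤) :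
    ∃ e : Fin (N - 1) → EuclideanSpace ℝ (Fin N),
      (∀ i, ‖e i‖ = 1) ∧
      (∀ i j, i ≠ j → ⟪e i, e j⟫ = 0) ∧
      (∀ i, ∀ u ∈ 𝓤, ∀ x ∈ B, u (reflHyp (e i) x) = u x) := by
  suffices H : ∀ k : ℕ, k ≤ N - 1 → ∃ e : Fin k → EuclideanSpace ℝ (Fin N),
      (∀ i, ‖e i‖ = 1) ∧ (∀ i j, i ≠ j → ⟪e i, e j⟫ = 0) ∧
      (∀ i, ∀ u ∈ 𝓤, ∀ x ∈ B, u (reflHyp (e i) x) = u x) from H _ le_rfl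
  intro k
  induction k with
  | zero => exact fun _ => ⟨Fin.elim0, fun i => i.elim0, fun i => i.elim0, fun i => i.elim0⟩
  | succ k ih =>
    intro hk
    obtain ⟨e, he₁, he₂, he₃⟩ := ih (by omega)
    have hdim : 1 < Module.finrank ℝ (Submodule.span ℝ (range e))ᗮ := by
      have h₁ := (Submodule.span ℝ (range e)).finrank_add_finrank_orthogonal
      have h₂ : Module.finrank ℝ (Submodule.span ℝ (range e)) ≤ k := by
        simpa [Set.finrank] using finrank_range_le_card (R := ℝ) e
      rw [finrank_euclideanSpace_fin] at h₁
      omega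
    obtain ⟨v, hv, hv₁, hv₂⟩ := exists_symm_in_submodule hB h𝓤 hSM _ hdim
    have hev : ∀ i, ⟪e i, v⟫ = 0 := fun i =>
      (Submodule.mem_orthogonal _ _).1 hv _ (Submodule.subset_span (mem_range_self i))
    refine ⟨Fin.cons v e, ?_, ?_, ?_⟩
    · exact Fin.cases hv₁ he₁
    · intro i j
      refine Fin.cases ?_ (fun i => ?_) i <;> refine Fin.cases ?_ (fun j => ?_) j
      · exact fun h => absurd rfl h
      · intro _
        simpa [real_inner_comm] using hev j
      · intro _
        simpa using hev i
      · intro h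
        simpa using he₂ i j (fun h' => h (by rw [h']))
    · exact Fin.cases hv₂ he₃

end
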